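/- Lower bound for the diastole of torsion-free groups (Corollary 1.4): Let (X,σ) be a δ-hyperbolic GCB-space which is P0-packed at scale r0 and let Γ be a torsion-free, non-elementary, discrete group of σ-isometries of X. Suppose ε0 > 0 is such that nilrad(Γ,x) ≥ ε0 for every x ∈ X (such an ε0, depending only on P0 and r0, exists by the generalized Margulis lemma). Then the diastole satisfies dias(Γ,X) = sup_{x∈X} inf_{g∈Γ, g≠1} d(x, g x) ≥ ε0. -/

import Mathlib

open Metric Filter

/-- Four-points condition for `δ`-hyperbolicity. -/
def IsDeltaHyperbolic (X : Type*) [MetricSpace X] (δ : ℝ) : Prop :=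
  ∀ x y z w : X,
    dist x y + dist z w ≤ max (dist x z + dist y w) (dist x w + dist y z) + 2 * δ

/-- `X` is `P₀`-packed at scale `r₀`: any subset of a closed ball of radius `3r₀` whose
points are pairwise at distance `> 2r₀` has cardinality at most `P₀`. -/
def IsPacked (X : Type*) [MetricSpace X] (P₀ r₀ : ℝ) : Prop :=
  ∀ x : X, ∀ S : Finset X, (↑S ⊆ closedBall x (3 * r₀)) →
    (∀ a ∈ S, ∀ b ∈ S, a ≠ b → 2 * r₀ < dist a b) → (S.card : ℝ) ≤ P₀

/-- A geodesically complete, convex, consistent, reversible geodesic bicombing on `X`.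
Together with completeness of `X` this is the notion of GCB-space. -/
structure IsGCB {X : Type*} [MetricSpace X] (σ : X → X → ℝ → X) : Prop where
  source : ∀ x y : X, σ x y 0 = x
  target : ∀ x y : X, σ x y 1 = y
  geodesic : ∀ x y : X, ∀ t ∈ Set.Icc (0:ℝ) 1, ∀ t' ∈ Set.Icc (0:ℝ) 1,
    dist (σ x y t) (σ x y t') = |t - t'| * dist x y
  convex : ∀ x y x' y' : X,
    ConvexOn ℝ (Set.Icc (0:ℝ) 1) fun t => dist (σ x y t) (σ x' y' t)
  consistent : ∀ x y : X, ∀ s t l : ℝ, 0 ≤ s → s ≤ t → t ≤ 1 → l ∈ Set.Icc (0:ℝ) 1 →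
    σ (σ x y s) (σ x y t) l = σ x y ((1 - l) * s + l * t)
  reversible : ∀ x y : X, ∀ t ∈ Set.Icc (0:ℝ) 1, σ x y t = σ y x (1 - t)
  geodComplete : ∀ x y : X, ∃ γ : ℝ → X, Isometry γ ∧
    (∀ s t : ℝ, s ≤ t → ∀ l ∈ Set.Icc (0:ℝ) 1, σ (γ s) (γ t) l = γ (s + l * (t - s))) ∧
    (∀ t ∈ Set.Icc (0:ℝ) 1, σ x y t = γ (t * dist x y))

/-- `g` is a `σ`-isometry: a surjective isometry preserving the bicombing `σ`. -/
def IsSigmaIsometry {X : Type*} [MetricSpace X] (σ : X → X → ℝ → X) (g : X ≃ᵢ X) : Prop :=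
  ∀ x y : X, ∀ t ∈ Set.Icc (0:ℝ) 1, g (σ x y t) = σ (g x) (g y) t

/-- A group of isometries is discrete if for every `x` and `R` only finitely many of its
elements displace `x` at most `R`. -/
def IsDiscreteSubgroup {X : Type*} [MetricSpace X] (Γ : Subgroup (X ≃ᵢ X)) : Prop :=
  ∀ x : X, ∀ R : ℝ, {g : X ≃ᵢ X | g ∈ Γ ∧ dist x (g x) ≤ R}.Finite

/-- A group is virtually nilpotent if it has a nilpotent subgroup of finite index. -/
def IsVirtuallyNilpotent (G : Type*) [Group G] : Prop :=
  ∃ H : Subgroup G, H.FiniteIndex ∧ Group.IsNilpotent H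

/-- `Γ` is non-elementary: it contains two elements generating a subgroup that is not
virtually nilpotent. -/
def IsNonElementary {X : Type*} [MetricSpace X] (Γ : Subgroup (X ≃ᵢ X)) : Prop :=
  ∃ a b : X ≃ᵢ X, a ∈ Γ ∧ b ∈ Γ ∧
    ¬ IsVirtuallyNilpotent ↥(Subgroup.closure ({a, b} : Set (X ≃ᵢ X)))

/-- An isometry is non-elliptic if its orbits are unbounded. -/
def IsNonElliptic {X : Type*} [MetricSpace X] (g : X ≃ᵢ X) : Prop :=
  ∀ x : X, ¬ Bornology.IsBounded (Set.range fun n : ℤ => (g ^ n) x)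

/-- The `r`-almost stabilizer `Γ_r(x)`, generated by the elements of `Γ` displacing `x`
at most `r`. -/
def almostStabilizer {X : Type*} [MetricSpace X] (Γ : Subgroup (X ≃ᵢ X)) (r : ℝ) (x : X) :
    Subgroup (X ≃ᵢ X) :=
  Subgroup.closure {g : X ≃ᵢ X | g ∈ Γ ∧ dist x (g x) ≤ r}

/-- The nilpotence radius of `Γ` at `x`. -/
noncomputable def nilrad {X : Type*} [MetricSpace X] (Γ : Subgroup (X ≃ᵢ X)) (x : X) : ℝ :=
  sSup {r : ℝ | 0 ≤ r ∧ IsVirtuallyNilpotent ↥(almostStabilizer Γ r x)}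

/-- The Margulis domain `M_ε(g)`. -/
def margulisDomain {X : Type*} [MetricSpace X] (g : X ≃ᵢ X) (ε : ℝ) : Set X :=
  {x : X | dist x (g x) ≤ ε}

/-- The generalized Margulis domain `ℳ_ε(g) = ⋃_{i ≠ 0} M_ε(gⁱ)`. -/
def genMargulisDomain {X : Type*} [MetricSpace X] (g : X ≃ᵢ X) (ε : ℝ) : Set X :=
  ⋃ i ∈ {i : ℤ | i ≠ 0}, margulisDomain (g ^ i) ε

/-- `f` parameterizes a geodesic segment from `x` to `y` on `[0, dist x y]`. -/
def IsGeodesicFrom {X : Type*} [MetricSpace X] (f : ℝ → X) (x y : X) : Prop :=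
  f 0 = x ∧ f (dist x y) = y ∧
    ∀ s ∈ Set.Icc 0 (dist x y), ∀ t ∈ Set.Icc 0 (dist x y), dist (f s) (f t) = |s - t|

/-- `X` is a geodesic space. -/
def IsGeodesicSpace (X : Type*) [MetricSpace X] : Prop :=
  ∀ x y : X, ∃ f : ℝ → X, IsGeodesicFrom f x y

/-- `C` is `lam`-quasiconvex: any two of its points are joined by a geodesic contained in
the closed `lam`-neighbourhood of `C`. -/
def IsQuasiconvex {X : Type*} [MetricSpace X] (lam : ℝ) (C : Set X) : Prop :=
  ∀ x ∈ C, ∀ y ∈ C, ∃ f : ℝ → X, IsGeodesicFrom f x y ∧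
    ∀ t ∈ Set.Icc 0 (dist x y), infDist (f t) C ≤ lam

/-- `C` is a convex subset: any two of its points are joined by a geodesic inside `C`. -/
def IsConvexSubset {X : Type*} [MetricSpace X] (C : Set X) : Prop :=
  ∀ x ∈ C, ∀ y ∈ C, ∃ f : ℝ → X, IsGeodesicFrom f x y ∧
    ∀ t ∈ Set.Icc 0 (dist x y), f t ∈ C

/-- Arc-length concatenation of three paths, of respective lengths `d₁`, `d₂` and the rest. -/
noncomputable def concatPath {X : Type*} (d₁ d₂ : ℝ) (f₁ f₂ f₃ : ℝ → X) : ℝ → X :=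
  fun t => if t ≤ d₁ then f₁ t else if t ≤ d₁ + d₂ then f₂ (t - d₁) else f₃ (t - d₁ - d₂)

/-!
Suppose that every point `x` is displaced by less than `r` by some nontrivial `G x ∈ Γ`, while all
the almost stabilizers `Γ_r(x)` are virtually nilpotent. A nilpotent group has nontrivial centre, so
two nontrivial elements of `Γ_r(x)` have powers commuting with a common nontrivial element; as
commuting isometries of infinite order have squares fixing the same points at infinity, the set `S`
of points at infinity fixed by `(G x) ^ 2` is the same for every small element at `x`. Hence it is
locally constant in `x`, and constant because `X` is connected.

Let `ξ ∈ S`. Prolonging a geodesic from `ξ` to `x` backwards through points `y` that go to infinity,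
the elements `(G y) ^ 2` fix `ξ` and so displace `x` by a bounded amount. By discreteness infinitely
many of them coincide, and the corresponding `y` accumulate at a second point `η ∈ S` opposite to
`ξ` as seen from `x`. An isometry of infinite order in a discrete group fixes at most two points at
infinity, so `η` does not depend on `x` and `X` is within bounded distance of a line. On such a
space every cyclic group with proper orbits is cobounded, so `Γ` is virtually cyclic.
-/

section GromovProduct

variable {X : Type*} [PseudoMetricSpace X]

/-- The Gromov product `(p|q)_x`. -/
noncomputable def gromovProduct (x p q : X) : ℝ :=
  (dist x p + dist x q - dist p q) / 2

lemma gromovProduct_comm (x p q : X) : gromovProduct x p q = gromovProduct x q p := by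
  rw [gromovProduct, gromovProduct, dist_comm p q, add_comm (dist x p)]

lemma gromovProduct_map (g : X ≃ᵢ X) (x p q : X) :
    gromovProduct (g x) (g p) (g q) = gromovProduct x p q := by
  simp only [gromovProduct, g.dist_eq]

lemma gromovProduct_self (x : X) : gromovProduct x x x = 0 := by
  simp [gromovProduct]

lemma gromovProduct_sub_dist_left_le (x x' p q : X) :
    gromovProduct x p q - dist x x' ≤ gromovProduct x' p q := by
  unfold gromovProduct
  linarith [dist_triangle x x' p, dist_triangle x x' q]

lemma gromovProduct_sub_dist_right_le (x p q q' : X) :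
    gromovProduct x p q - dist q q' ≤ gromovProduct x p q' := by
  unfold gromovProduct
  linarith [dist_triangle p q q', dist_triangle x q' q, dist_comm q q']

lemma dist_sub_dist_le_gromovProduct (x p q : X) : dist x p - dist p q ≤ gromovProduct x p q := by
  unfold gromovProduct
  linarith [dist_triangle x q p, dist_comm p q]

end GromovProduct

namespace IsDeltaHyperbolic

variable {X : Type*} [MetricSpace X] {δ : ℝ}

lemma nonneg (hX : IsDeltaHyperbolic X δ) (x : X) : 0 ≤ δ := by
  simpa using hX x x x x

lemma min_gromovProduct_sub_le (hX : IsDeltaHyperbolic X δ) (x p q s : X) :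
    min (gromovProduct x p q) (gromovProduct x q s) - δ ≤ gromovProduct x p s := by
  have h := hX p s x q
  unfold gromovProduct
  rw [dist_comm p x, dist_comm s x, dist_comm s q] at h
  rcases max_cases (dist x p + dist q s) (dist p q + dist x s) with h' | h' <;>
    rcases min_cases ((dist x p + dist x q - dist p q) / 2)
      ((dist x q + dist x s - dist q s) / 2) with h'' | h'' <;> linarith

lemma lt_gromovProduct_trans (hX : IsDeltaHyperbolic X δ) {x p q s : X} {C : ℝ}
    (hpq : C + δ < gromovProduct x p q) (hqs : C + δ < gromovProduct x q s) :
    C < gromovProduct x p s := by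
  linarith [hX.min_gromovProduct_sub_le x p q s, lt_min hpq hqs]

lemma gromovProduct_le_of_lt (hX : IsDeltaHyperbolic X δ) {x p q s : X} {C : ℝ}
    (hps : gromovProduct x p s ≤ C) (hpq : C + δ < gromovProduct x p q) :
    gromovProduct x q s ≤ C + δ := by
  by_contra! hqs
  exact hps.not_gt (hX.lt_gromovProduct_trans hpq hqs)

lemma dist_map_add_dist_map_le (hX : IsDeltaHyperbolic X δ) {g : X ≃ᵢ X} {x p : X}
    (hp : dist x (g x) + δ < gromovProduct x p (g p)) :
    dist (g x) p + dist x (g p) ≤ 2 * dist x p + 2 * δ := by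
  have h := hX (g x) p x (g p)
  unfold gromovProduct at hp
  rw [dist_comm (g x) x, g.dist_eq, dist_comm p x] at h
  rcases max_cases (dist x (g x) + dist p (g p)) (dist x p + dist x p) with h' | h'
  · linarith [dist_triangle x (g x) p]
  · linarith

lemma dist_map_le_gromovProduct_add (hX : IsDeltaHyperbolic X δ) {g : X ≃ᵢ X} {x p : X}
    (hp : dist x (g x) + δ < gromovProduct x p (g p)) :
    dist x (g x) ≤ gromovProduct x p (g x) + gromovProduct x p (g⁻¹ x) + δ := by
  have h := hX.dist_map_add_dist_map_le hp
  have hgp : gromovProduct x p (g⁻¹ x) = gromovProduct (g x) (g p) x := by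
    rw [← gromovProduct_map g, g.apply_inv_self]
  rw [hgp]
  unfold gromovProduct
  rw [g.dist_eq, dist_comm (g x) x, dist_comm (g p) x, dist_comm p (g x)]
  linarith

lemma dist_map_le_of_tripod (hX : IsDeltaHyperbolic X δ) {g : X ≃ᵢ X} {x p q s : X} {C : ℝ}
    (hpq : gromovProduct x p q ≤ C) (hps : gromovProduct x p s ≤ C)
    (hqs : gromovProduct x q s ≤ C)
    (hp : dist x (g x) + δ < gromovProduct x p (g p))
    (hq : dist x (g x) + δ < gromovProduct x q (g q))
    (hs : dist x (g x) + δ < gromovProduct x s (g s)) :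
    dist x (g x) ≤ 2 * C + 3 * δ := by
  have key (a : X) {u v : X} (huv : gromovProduct x u v ≤ C) :
      gromovProduct x u a ≤ C + δ ∨ gromovProduct x v a ≤ C + δ := by
    rw [gromovProduct_comm x v, or_iff_not_imp_left, not_le]
    exact hX.gromovProduct_le_of_lt huv
  have finish {u : X} (hu : dist x (g x) + δ < gromovProduct x u (g u))
      (h : gromovProduct x u (g x) ≤ C + δ) (h' : gromovProduct x u (g⁻¹ x) ≤ C + δ) :
      dist x (g x) ≤ 2 * C + 3 * δ := by
    linarith [hX.dist_map_le_gromovProduct_add hu]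
  -- Each of `g x` and `g⁻¹ x` has a large product with at most one of `p`, `q`, `s`, so one of
  -- these three points has a small product with both.
  rcases key (g x) hpq with h | h <;> rcases key (g⁻¹ x) hpq with h' | h'
  · exact finish hp h h'
  · rcases key (g x) hqs with k | k
    · exact finish hq k h'
    · rcases key (g⁻¹ x) hps with k' | k'
      · exact finish hp h k'
      · exact finish hs k k'
  · rcases key (g x) hps with k | k
    · exact finish hp k h'
    · rcases key (g⁻¹ x) hqs with k' | k'
      · exact finish hq h k'
      · exact finish hs k k'
  · exact finish hq h h'

lemma dist_map_le_of_between (hX : IsDeltaHyperbolic X δ) {g : X ≃ᵢ X} {x y p : X}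
    (hxy : dist y p = dist y x + dist x p)
    (hp : dist x (g x) + δ < gromovProduct x p (g p)) :
    dist x (g x) ≤ 2 * dist y (g y) + 3 * δ := by
  have hδ := hX.nonneg x
  have h := hX.dist_map_add_dist_map_le hp
  have h₁ := hX x (g x) y p
  have h₂ := hX x (g x) (g p) (g y)
  have t₁ := dist_triangle (g x) (g y) y
  have t₂ := dist_triangle x y (g y)
  have t₃ : 0 ≤ dist y (g y) := dist_nonneg
  rw [dist_comm x y] at h₁ t₂
  rw [dist_comm (g y) y, g.dist_eq, dist_comm x y] at t₁
  rw [dist_comm (g p) (g y), g.dist_eq, g.dist_eq, g.dist_eq, dist_comm x y] at h₂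
  rcases max_cases (dist y x + dist (g x) p) (dist x p + dist (g x) y) with h' | h' <;>
    rcases max_cases (dist x (g p) + dist y x) (dist x (g y) + dist x p) with h'' | h'' <;>
    linarith

end IsDeltaHyperbolic

lemma eventually_prod_exists_mid {α β γ : Type*} {U : Filter α} {V : Filter β} {W : Filter γ}
    [V.NeBot] {P : α × β → Prop} {Q : β × γ → Prop} (hP : ∀ᶠ z in U ×ˢ V, P z)
    (hQ : ∀ᶠ z in V ×ˢ W, Q z) : ∀ᶠ z in U ×ˢ W, ∃ b, P (z.1, b) ∧ Q (b, z.2) := by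
  obtain ⟨pa, ha, pb, hb, hab⟩ := eventually_prod_iff.1 hP
  obtain ⟨qb, hb', qc, hc, hbc⟩ := eventually_prod_iff.1 hQ
  obtain ⟨b, hpb, hqb⟩ := (hb.and hb').exists
  filter_upwards [ha.prod_mk hc] with z hz
  exact ⟨b, hab hz.1 hpb, hbc hqb hz.2⟩

/-- Two filters on `X` converge to the same point of the Gromov boundary. This is a partial
equivalence relation on filters, whose classes play the role of the points at infinity: `U`
converges to a point at infinity iff `IsAsymptotic U U`. -/
structure IsAsymptotic {X : Type*} [PseudoMetricSpace X] (U V : Filter X) : Prop where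
  neBot_left : U.NeBot
  neBot_right : V.NeBot
  tendsto (x : X) : Tendsto (fun z : X × X => gromovProduct x z.1 z.2) (U ×ˢ V) atTop

namespace IsAsymptotic

section PseudoMetricSpace

variable {X : Type*} [PseudoMetricSpace X] {U V : Filter X}

lemma of_basepoint [hU : U.NeBot] [hV : V.NeBot] (x : X)
    (h : Tendsto (fun z : X × X => gromovProduct x z.1 z.2) (U ×ˢ V) atTop) :
    IsAsymptotic U V :=
  ⟨hU, hV, fun x' => tendsto_atTop_mono (fun z => gromovProduct_sub_dist_left_le x x' z.1 z.2)
    (tendsto_atTop_add_const_right _ _ h)⟩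

lemma symm (h : IsAsymptotic U V) : IsAsymptotic V U where
  neBot_left := h.neBot_right
  neBot_right := h.neBot_left
  tendsto x := ((h.tendsto x).comp tendsto_prod_swap).congr fun _ => gromovProduct_comm x _ _

lemma eventually_lt (h : IsAsymptotic U V) (x : X) (C : ℝ) :
    ∀ᶠ z in U ×ˢ V, C < gromovProduct x z.1 z.2 :=
  (h.tendsto x).eventually_gt_atTop C

lemma map (h : IsAsymptotic U V) (g : X ≃ᵢ X) : IsAsymptotic (U.map g) (V.map g) where
  neBot_left := h.neBot_left.map g
  neBot_right := h.neBot_right.map g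
  tendsto x := by
    rw [prod_map_map_eq, tendsto_map'_iff]
    refine (h.tendsto (g⁻¹ x)).congr fun z => ?_
    rw [← gromovProduct_map g, g.apply_inv_self, Function.comp_apply]

lemma of_map {g : X ≃ᵢ X} (h : IsAsymptotic (U.map g) (V.map g)) : IsAsymptotic U V := by
  have hg : (g⁻¹ : X ≃ᵢ X) ∘ g = id := funext g.inv_apply_self
  simpa only [Filter.map_map, hg, Filter.map_id] using h.map g⁻¹

lemma map_of_dist_le (h : IsAsymptotic U U) {f : X → X} {R : ℝ}
    (hf : ∀ᶠ p in U, dist p (f p) ≤ R) : IsAsymptotic (U.map f) U := by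
  refine symm ⟨h.neBot_left, h.neBot_left.map f, fun x => ?_⟩
  rw [prod_map_right, tendsto_map'_iff]
  refine tendsto_atTop_mono' _ ?_ (tendsto_atTop_add_const_right _ (-R) (h.tendsto x))
  filter_upwards [tendsto_snd.eventually hf] with z hz
  have := gromovProduct_sub_dist_right_le x z.1 z.2 (f z.2)
  simp only [Function.comp_apply, Prod.map_fst, Prod.map_snd, id_eq]
  linarith

lemma eventually_lt_gromovProduct_map {f : X → X} (h : IsAsymptotic (U.map f) U) (x : X) (C : ℝ) :
    ∀ᶠ p in U, C < gromovProduct x p (f p) := by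
  filter_upwards [(tendsto_map.prodMk tendsto_id).eventually (h.eventually_lt x C)] with p hp
  rwa [gromovProduct_comm]

lemma not_eventually_le (h : IsAsymptotic U V) (x : X) (C : ℝ) :
    ¬ ∀ᶠ z in U ×ˢ V, gromovProduct x z.1 z.2 ≤ C := by
  intro hle
  have := h.neBot_left
  have := h.neBot_right
  obtain ⟨z, hz, hz'⟩ := (hle.and (h.eventually_lt x C)).exists
  exact hz.not_gt hz'

end PseudoMetricSpace

variable {X : Type*} [MetricSpace X] {δ : ℝ} {U V W : Filter X}

lemma trans (hX : IsDeltaHyperbolic X δ) (hUV : IsAsymptotic U V) (hVW : IsAsymptotic V W) :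
    IsAsymptotic U W := by
  refine ⟨hUV.neBot_left, hVW.neBot_right, fun x => tendsto_atTop.2 fun C => ?_⟩
  have := hUV.neBot_right
  filter_upwards [eventually_prod_exists_mid (hUV.eventually_lt x (C + δ))
    (hVW.eventually_lt x (C + δ))] with z ⟨q, hq, hq'⟩
  exact (hX.lt_gromovProduct_trans hq hq').le

lemma refl_right (hX : IsDeltaHyperbolic X δ) (h : IsAsymptotic U V) : IsAsymptotic V V :=
  h.symm.trans hX h

lemma of_eventually_eventually (hX : IsDeltaHyperbolic X δ) [U.NeBot] (x : X)
    (h : ∀ C : ℝ, ∀ᶠ p in U, ∀ᶠ q in U, C < gromovProduct x p q) : IsAsymptotic U U := by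
  refine of_basepoint x (tendsto_atTop.2 fun C => ?_)
  obtain ⟨p, hp⟩ := (h (C + δ)).exists
  filter_upwards [hp.prod_mk hp] with z hz
  refine (hX.lt_gromovProduct_trans (q := p) ?_ hz.2).le
  rw [gromovProduct_comm]
  exact hz.1

lemma exists_eventually_gromovProduct_le (hX : IsDeltaHyperbolic X δ) (hU : IsAsymptotic U U)
    (hV : IsAsymptotic V V) (h : ¬ IsAsymptotic U V) (x : X) :
    ∃ C : ℝ, ∀ᶠ z in U ×ˢ V, gromovProduct x z.1 z.2 ≤ C := by
  have := hU.neBot_left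
  have := hV.neBot_left
  by_contra! hfreq
  refine h (of_basepoint x (tendsto_atTop.2 fun C => ?_))
  obtain ⟨A, hA, hAA⟩ := eventually_prod_self_iff'.1 (hU.eventually_lt x (C + δ + δ))
  obtain ⟨B, hB, hBB⟩ := eventually_prod_self_iff'.1 (hV.eventually_lt x (C + δ))
  obtain ⟨⟨p, q⟩, hpq, hp, hq⟩ := ((hfreq (C + δ + δ)).and_eventually (prod_mem_prod hA hB)).exists
  filter_upwards [prod_mem_prod hA hB] with z hz
  have hzq := hX.lt_gromovProduct_trans (hAA z.1 hz.1 p hp) hpq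
  exact (hX.lt_gromovProduct_trans hzq (hBB q hq z.2 hz.2)).le

lemma eventually_gromovProduct_le (hX : IsDeltaHyperbolic X δ) (hUV : IsAsymptotic U V) {x : X}
    {C : ℝ} (h : ∀ᶠ z in U ×ˢ W, gromovProduct x z.1 z.2 ≤ C) :
    ∀ᶠ z in V ×ˢ W, gromovProduct x z.1 z.2 ≤ C + δ := by
  have := hUV.neBot_left
  filter_upwards [eventually_prod_exists_mid (hUV.symm.eventually_lt x (C + δ)) h]
    with z ⟨q, hq, hq'⟩
  rw [gromovProduct_comm] at hq
  exact hX.gromovProduct_le_of_lt hq' hq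

end IsAsymptotic

/-- The points at infinity fixed by `g`, a point at infinity being represented by all the filters
that converge to it. -/
def fixedEnds {X : Type*} [PseudoMetricSpace X] (g : X ≃ᵢ X) : Set (Filter X) :=
  {U | IsAsymptotic (U.map g) U}

section FixedEnds

variable {X : Type*} [MetricSpace X] {δ : ℝ} {g h : X ≃ᵢ X} {U V W : Filter X}

lemma mul_mem_fixedEnds (hX : IsDeltaHyperbolic X δ) (hg : U ∈ fixedEnds g)
    (hh : U ∈ fixedEnds h) : U ∈ fixedEnds (g * h) := by
  have hgh := IsAsymptotic.map hh g
  rw [Filter.map_map] at hgh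
  exact hgh.trans hX hg

lemma pow_mem_fixedEnds (hX : IsDeltaHyperbolic X δ) (hg : U ∈ fixedEnds g) (n : ℕ) :
    U ∈ fixedEnds (g ^ n) := by
  induction n with
  | zero => simpa [fixedEnds] using IsAsymptotic.refl_right hX hg
  | succ n ih => exact pow_succ g n ▸ mul_mem_fixedEnds hX ih hg

lemma map_mem_fixedEnds_of_commute (hgh : Commute g h) (hU : U ∈ fixedEnds g) :
    U.map h ∈ fixedEnds g := by
  have hcomp : (h ∘ g : X → X) = g ∘ h := congrArg DFunLike.coe hgh.eq.symm
  have hU' := IsAsymptotic.map hU h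
  rwa [Filter.map_map, hcomp, ← Filter.map_map] at hU'

lemma dist_map_le_of_mem_fixedEnds (hX : IsDeltaHyperbolic X δ) (hU : U ∈ fixedEnds g)
    (hV : V ∈ fixedEnds g) (hW : W ∈ fixedEnds g) {x : X} {C : ℝ}
    (hUV : ∀ᶠ z in U ×ˢ V, gromovProduct x z.1 z.2 ≤ C)
    (hUW : ∀ᶠ z in U ×ˢ W, gromovProduct x z.1 z.2 ≤ C)
    (hVW : ∀ᶠ z in V ×ˢ W, gromovProduct x z.1 z.2 ≤ C) :
    dist x (g x) ≤ 2 * C + 3 * δ := by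
  have := hU.neBot_right
  have := hV.neBot_right
  have := hW.neBot_right
  have hfix {U' : Filter X} (hU' : U' ∈ fixedEnds g) :=
    hU'.eventually_lt_gromovProduct_map x (dist x (g x) + δ)
  obtain ⟨p, ⟨hpV, hpW⟩, hp⟩ := ((hUV.curry.and hUW.curry).and (hfix hU)).exists
  obtain ⟨q, ⟨hpq, hqW⟩, hq⟩ := ((hpV.and hVW.curry).and (hfix hV)).exists
  obtain ⟨s, ⟨hps, hqs⟩, hs⟩ := ((hpW.and hqW).and (hfix hW)).exists
  exact hX.dist_map_le_of_tripod hpq hps hqs hp hq hs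

end FixedEnds

/-- The powers `g ^ n x` leave every bounded set as `n → ±∞`; for an element `g` of a discrete
group this says that `g` has infinite order. -/
def HasProperOrbits {X : Type*} [PseudoMetricSpace X] (g : X ≃ᵢ X) : Prop :=
  ∀ x : X, Tendsto (fun n : ℤ => (g ^ n) x) cofinite (Bornology.cobounded X)

lemma dist_pow_apply_le {X : Type*} [PseudoMetricSpace X] (g : X ≃ᵢ X) (x : X) (n : ℕ) :
    dist x ((g ^ n) x) ≤ n * dist x (g x) := by
  induction n with
  | zero => simp
  | succ n ih =>
    calc dist x ((g ^ (n + 1)) x)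
        ≤ dist x ((g ^ n) x) + dist ((g ^ n) x) ((g ^ (n + 1)) x) := dist_triangle _ _ _
      _ = dist x ((g ^ n) x) + dist x (g x) := by
        rw [pow_succ, IsometryEquiv.mul_apply, IsometryEquiv.dist_eq]
      _ ≤ (n + 1 : ℕ) * dist x (g x) := by push_cast; linarith

namespace HasProperOrbits

section PseudoMetricSpace

variable {X : Type*} [PseudoMetricSpace X] {g : X ≃ᵢ X}

lemma tendsto_dist (hg : HasProperOrbits g) (x y : X) :
    Tendsto (fun n : ℤ => dist y ((g ^ n) x)) cofinite atTop :=
  (tendsto_dist_left_cobounded_atTop y).comp (hg x)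

lemma pow (hg : HasProperOrbits g) {n : ℕ} (hn : n ≠ 0) : HasProperOrbits (g ^ n) := by
  intro x
  have hinj : Function.Injective fun k : ℤ => (n : ℤ) * k :=
    mul_right_injective₀ (Nat.cast_ne_zero.2 hn)
  simpa only [zpow_mul, zpow_natCast, Function.comp_def] using (hg x).comp hinj.tendsto_cofinite

lemma not_isOfFinOrder [Nonempty X] (hg : HasProperOrbits g) : ¬ IsOfFinOrder g := by
  obtain ⟨x⟩ := ‹Nonempty X›
  intro h
  obtain ⟨n, hn, hgn⟩ := isOfFinOrder_iff_pow_eq_one.1 h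
  have hone := (hg.pow hn.ne').tendsto_dist x x
  obtain ⟨k, hk⟩ := (hone.eventually_gt_atTop 0).exists
  simp [hgn] at hk

lemma exists_lt_dist_pow (hg : HasProperOrbits g) (x : X) (R : ℝ) :
    ∃ n : ℕ, R < dist x ((g ^ n) x) := by
  have h := (hg.tendsto_dist x x).comp (Nat.cast_injective (R := ℤ)).tendsto_cofinite
  simpa using (h.eventually_gt_atTop R).exists

end PseudoMetricSpace

variable {X : Type*} [MetricSpace X] {δ : ℝ} {g h : X ≃ᵢ X}

lemma isAsymptotic_of_mem_fixedEnds (hX : IsDeltaHyperbolic X δ) (hg : HasProperOrbits g)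
    {U V W : Filter X} (hU : U ∈ fixedEnds g) (hV : V ∈ fixedEnds g) (hW : W ∈ fixedEnds g) :
    IsAsymptotic U V ∨ IsAsymptotic U W ∨ IsAsymptotic V W := by
  by_contra! hne
  have := hU.neBot_right
  obtain ⟨x⟩ := U.nonempty_of_neBot
  have hbdd {U' V' : Filter X} (hU' : U' ∈ fixedEnds g) (hV' : V' ∈ fixedEnds g) :=
    IsAsymptotic.exists_eventually_gromovProduct_le hX
      (IsAsymptotic.refl_right hX hU') (IsAsymptotic.refl_right hX hV')
  obtain ⟨C₁, h₁⟩ := hbdd hU hV hne.1 x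
  obtain ⟨C₂, h₂⟩ := hbdd hU hW hne.2.1 x
  obtain ⟨C₃, h₃⟩ := hbdd hV hW hne.2.2 x
  set C := max C₁ (max C₂ C₃)
  obtain ⟨n, hn⟩ := hg.exists_lt_dist_pow x (2 * C + 3 * δ)
  refine hn.not_ge (dist_map_le_of_mem_fixedEnds hX (pow_mem_fixedEnds hX hU n)
    (pow_mem_fixedEnds hX hV n) (pow_mem_fixedEnds hX hW n) ?_ ?_ ?_)
  · exact h₁.mono fun z hz => hz.trans (le_max_left _ _)
  · exact h₂.mono fun z hz => hz.trans ((le_max_left _ _).trans (le_max_right _ _))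
  · exact h₃.mono fun z hz => hz.trans ((le_max_right _ _).trans (le_max_right _ _))

lemma mem_fixedEnds_of_dist_le (hX : IsDeltaHyperbolic X δ) (hg : HasProperOrbits g)
    {U : Ultrafilter X} {R : ℝ} (hfar : (U : Filter X) ≤ Bornology.cobounded X)
    (hR : ∀ᶠ p in (U : Filter X), dist p (g p) ≤ R) : (U : Filter X) ∈ fixedEnds g := by
  obtain ⟨x⟩ := (U : Filter X).nonempty_of_neBot
  refine IsAsymptotic.map_of_dist_le (IsAsymptotic.of_eventually_eventually hX x ?_) hR
  -- Otherwise `U`-many points pairwise have bounded product, and three of them form a tripod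
  -- that is coarsely fixed by a power of `g` moving `x` far away.
  by_contra! ⟨C, hC⟩
  obtain ⟨n, hn⟩ := hg.exists_lt_dist_pow x (2 * C + 3 * δ)
  have hfix : ∀ᶠ p in (U : Filter X),
      dist x ((g ^ n) x) + δ < gromovProduct x p ((g ^ n) p) := by
    have hdist := (tendsto_dist_left_cobounded_atTop x).mono_left hfar
    filter_upwards [hdist.eventually_gt_atTop (dist x ((g ^ n) x) + δ + n * R), hR] with p hp hpR
    have : (n : ℝ) * dist p (g p) ≤ n * R := by gcongr
    linarith [dist_sub_dist_le_gromovProduct x p ((g ^ n) p), dist_pow_apply_le g p n]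
  obtain ⟨p, hpU, hp⟩ := (hC.and hfix).exists
  obtain ⟨q, ⟨hqU, hq⟩, hpq⟩ := ((hC.and hfix).and hpU).exists
  obtain ⟨s, ⟨hqs, hs⟩, hps⟩ := ((hqU.and hfix).and hpU).exists
  exact hn.not_ge (hX.dist_map_le_of_tripod hpq hps hqs hp hq hs)

lemma fixedEnds_nonempty [Nonempty X] (hX : IsDeltaHyperbolic X δ) (hg : HasProperOrbits g) :
    (fixedEnds g).Nonempty := by
  obtain ⟨x⟩ := ‹Nonempty X›
  refine ⟨_, hg.mem_fixedEnds_of_dist_le hX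
    (U := (hyperfilter ℤ).map fun n => (g ^ n) x) (R := dist x (g x)) ?_ ?_⟩
  · exact (hg x).mono_left hyperfilter_le_cofinite
  · change ∀ᶠ n : ℤ in (hyperfilter ℤ : Filter ℤ),
      dist ((g ^ n) x) (g ((g ^ n) x)) ≤ dist x (g x)
    refine Eventually.of_forall fun n => le_of_eq ?_
    rw [← IsometryEquiv.mul_apply, ← zpow_one_add, add_comm, zpow_add_one, IsometryEquiv.mul_apply,
      IsometryEquiv.dist_eq]

lemma fixedEnds_sq_subset_of_commute (hX : IsDeltaHyperbolic X δ) (hg : HasProperOrbits g)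
    (hgh : Commute g h) : fixedEnds (g ^ 2) ⊆ fixedEnds (h ^ 2) := by
  intro U hU
  have hgh' := hgh.pow_left 2
  have hhU := map_mem_fixedEnds_of_commute hgh' hU
  have hsq : U.map (h ^ 2 : X ≃ᵢ X) = (U.map h).map h := by
    rw [Filter.map_map, pow_two, IsometryEquiv.coe_mul]
  change IsAsymptotic (U.map (h ^ 2 : X ≃ᵢ X)) U
  rw [hsq]
  have hswap (h' : IsAsymptotic U (U.map h)) : IsAsymptotic ((U.map h).map h) U :=
    (h'.trans hX (h'.map h)).symm
  -- `g ^ 2` fixes the ends `U`, `h U` and `h² U`, so two of them coincide.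
  rcases (hg.pow two_ne_zero).isAsymptotic_of_mem_fixedEnds hX hU hhU
    (map_mem_fixedEnds_of_commute hgh' hhU) with h' | h' | h'
  · exact hswap h'
  · exact h'.symm
  · exact hswap h'.of_map

lemma fixedEnds_sq_eq_of_commute (hX : IsDeltaHyperbolic X δ) (hg : HasProperOrbits g)
    (hh : HasProperOrbits h) (hgh : Commute g h) : fixedEnds (g ^ 2) = fixedEnds (h ^ 2) :=
  (hg.fixedEnds_sq_subset_of_commute hX hgh).antisymm
    (hh.fixedEnds_sq_subset_of_commute hX hgh.symm)

end HasProperOrbits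

namespace IsVirtuallyNilpotent

variable {G : Type*} [Group G]

lemma of_injective {H : Type*} [Group H] (hH : IsVirtuallyNilpotent H) {f : G →* H}
    (hf : Function.Injective f) : IsVirtuallyNilpotent G := by
  obtain ⟨N, hN, hnil⟩ := hH
  have hinj : Function.Injective (f.subgroupComap N) := fun u v huv =>
    Subtype.ext (hf (congrArg Subtype.val huv))
  have hker : (f.subgroupComap N).ker ≤ Subgroup.center (N.comap f) :=
    (MonoidHom.ker_eq_bot_iff _).2 hinj ▸ bot_le
  refine ⟨N.comap f, ⟨?_⟩, Subgroup.isNilpotent_of_ker_le_center (f.subgroupComap N) hker⟩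
  rw [Subgroup.index_comap]
  have : N.IsFiniteRelIndex f.range := Subgroup.isFiniteRelIndex_of_finiteIndex
  exact Subgroup.relIndex_ne_zero

lemma of_finiteIndex_zpowers {g : G} (hg : (Subgroup.zpowers g).FiniteIndex) :
    IsVirtuallyNilpotent G := by
  open scoped IsMulCommutative in exact ⟨Subgroup.zpowers g, hg, CommGroup.isNilpotent⟩

lemma exists_commute_pow (hG : IsVirtuallyNilpotent G) {g : G} (hg : ¬ IsOfFinOrder g) (h : G) :
    ∃ z : G, z ≠ 1 ∧
      ∃ m n : ℕ, m ≠ 0 ∧ n ≠ 0 ∧ Commute (g ^ m) z ∧ Commute (h ^ n) z := by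
  obtain ⟨N, hN, hnil⟩ := hG
  obtain ⟨m, hm, -, hgm⟩ := Subgroup.exists_pow_mem_of_index_ne_zero hN.index_ne_zero g
  obtain ⟨n, hn, -, hhn⟩ := Subgroup.exists_pow_mem_of_index_ne_zero hN.index_ne_zero h
  have hgm_ne : (⟨g ^ m, hgm⟩ : N) ≠ 1 := fun h1 =>
    hg (isOfFinOrder_iff_pow_eq_one.2 ⟨m, hm, congrArg Subtype.val h1⟩)
  have : Nontrivial N := ⟨_, _, hgm_ne⟩
  obtain ⟨⟨z, hz⟩, hz1⟩ :=
    (Subgroup.ne_bot_iff_exists_ne_one).1 (Group.IsNilpotent.center_ne_bot (G := N))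
  have hcomm {u : G} (hu : u ∈ N) : Commute u z :=
    congrArg Subtype.val (Subgroup.mem_center_iff.1 hz ⟨u, hu⟩)
  refine ⟨z, fun h1 => hz1 ?_, m, n, hm.ne', hn.ne', hcomm hgm, hcomm hhn⟩
  exact Subtype.ext (Subtype.ext h1)

end IsVirtuallyNilpotent

lemma fixedEnds_sq_eq_of_isVirtuallyNilpotent {X : Type*} [MetricSpace X] [Nonempty X] {δ : ℝ}
    (hX : IsDeltaHyperbolic X δ) {K : Subgroup (X ≃ᵢ X)} (hK : IsVirtuallyNilpotent K)
    (hproper : ∀ g ∈ K, g ≠ 1 → HasProperOrbits g) {g h : X ≃ᵢ X} (hg : g ∈ K) (hg1 : g ≠ 1)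
    (hh : h ∈ K) (hh1 : h ≠ 1) : fixedEnds (g ^ 2) = fixedEnds (h ^ 2) := by
  have hg' := hproper g hg hg1
  have hh' := hproper h hh hh1
  have hgo : ¬ IsOfFinOrder (⟨g, hg⟩ : K) := fun hfin =>
    hg'.not_isOfFinOrder (K.subtype.isOfFinOrder hfin)
  obtain ⟨z, hz1, m, n, hm, hn, hgz, hhz⟩ := hK.exists_commute_pow hgo ⟨h, hh⟩
  have hz' := hproper z z.2 fun h1 => hz1 (Subtype.ext h1)
  calc fixedEnds (g ^ 2)
      = fixedEnds ((g ^ m) ^ 2) :=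
        hg'.fixedEnds_sq_eq_of_commute hX (hg'.pow hm) (Commute.self_pow g m)
    _ = fixedEnds ((z : X ≃ᵢ X) ^ 2) :=
        (hg'.pow hm).fixedEnds_sq_eq_of_commute hX hz' (hgz.map K.subtype)
    _ = fixedEnds ((h ^ n) ^ 2) :=
        hz'.fixedEnds_sq_eq_of_commute hX (hh'.pow hn) (hhz.map K.subtype).symm
    _ = fixedEnds (h ^ 2) :=
        (hh'.pow hn).fixedEnds_sq_eq_of_commute hX hh' (Commute.pow_self h n)

/-- Every three points of `X` are, up to the error `c`, aligned: one of them is almost between the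
other two. -/
def IsCoarseLine (X : Type*) [PseudoMetricSpace X] (c : ℝ) : Prop :=
  ∀ u v w : X, gromovProduct u v w ≤ c ∨ gromovProduct v u w ≤ c ∨ gromovProduct w u v ≤ c

namespace IsCoarseLine

lemma of_gromovProduct_le {X : Type*} [MetricSpace X] {δ C : ℝ} (hX : IsDeltaHyperbolic X δ)
    {U V : Filter X} [U.NeBot] [V.NeBot]
    (h : ∀ x : X, ∀ᶠ z in U ×ˢ V, gromovProduct x z.1 z.2 ≤ C) :
    IsCoarseLine X (2 * C + 2 * δ) := by
  intro u v w
  obtain ⟨⟨p, q⟩, ⟨hu, hv⟩, hw⟩ := (((h u).and (h v)).and (h w)).exists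
  -- `dist · p` is a coordinate on the coarse line from `p` to `q`.
  have hcoord {a b : X} (ha : gromovProduct a p q ≤ C) (hb : gromovProduct b p q ≤ C)
      (hab : dist a p ≤ dist b p) : dist a b ≤ dist b p - dist a p + 2 * C + 2 * δ := by
    have hfour := hX a b p q
    unfold gromovProduct at ha hb
    rcases max_cases (dist a p + dist b q) (dist a q + dist b p) with h' | h' <;> linarith
  have hmid {a b d : X} (ha : gromovProduct a p q ≤ C) (hb : gromovProduct b p q ≤ C)
      (hd : gromovProduct d p q ≤ C) (hab : dist a p ≤ dist b p) (hbd : dist b p ≤ dist d p) :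
      gromovProduct b a d ≤ 2 * C + 2 * δ := by
    unfold gromovProduct
    linarith [hcoord ha hb hab, hcoord hb hd hbd, dist_triangle d a p, dist_comm b a,
      dist_comm d a]
  have hmid' {a b d : X} (ha : gromovProduct a p q ≤ C) (hb : gromovProduct b p q ≤ C)
      (hd : gromovProduct d p q ≤ C) (hab : dist a p ≤ dist b p) (hbd : dist b p ≤ dist d p) :
      gromovProduct b d a ≤ 2 * C + 2 * δ :=
    gromovProduct_comm b a d ▸ hmid ha hb hd hab hbd
  rcases le_total (dist u p) (dist v p) with huv | huv <;>
    rcases le_total (dist v p) (dist w p) with hvw | hvw <;>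
    rcases le_total (dist u p) (dist w p) with huw | huw
  · exact .inr (.inl (hmid hu hv hw huv hvw))
  · exact .inr (.inl (hmid hu hv hw huv hvw))
  · exact .inr (.inr (hmid hu hw hv huw hvw))
  · exact .inl (hmid' hw hu hv huw huv)
  · exact .inl (hmid hv hu hw huv huw)
  · exact .inr (.inr (hmid' hv hw hu hvw huw))
  · exact .inr (.inl (hmid' hw hv hu hvw huv))
  · exact .inr (.inl (hmid' hw hv hu hvw huv))

variable {X : Type*} [PseudoMetricSpace X] {c : ℝ}

lemma dist_le_of_closest (hX : IsCoarseLine X c) {y o p q : X} (hq : dist o q = dist o p)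
    (hop : 3 * c < dist o p) (hpq : 2 * c < dist p q) (hyp : dist y o ≤ dist y p)
    (hyq : dist y o ≤ dist y q) : dist y o ≤ dist o p := by
  have hc : 0 ≤ c := by simpa [gromovProduct_self] using hX y y y
  by_contra! hfar
  have hmid {p' : X} (hp' : dist o p' = dist o p) (hyp' : dist y o ≤ dist y p') :
      gromovProduct o y p' ≤ c := by
    rcases hX y o p' with h | h | h
    · unfold gromovProduct at h
      linarith
    · exact h
    · unfold gromovProduct at h
      linarith [dist_comm p' y, dist_comm p' o]
  have hp := hmid rfl hyp
  have hq' := hmid hq hyq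
  have ho : gromovProduct o p q ≤ c := by
    rcases hX o p q with h | h | h
    · exact h
    · unfold gromovProduct at h
      linarith [dist_comm p o]
    · unfold gromovProduct at h
      linarith [dist_comm q o, dist_comm q p]
  -- `o` is almost between any two of `y`, `p` and `q`, which cannot happen on a line.
  unfold gromovProduct at hp hq' ho
  rcases hX y p q with h | h | h <;> unfold gromovProduct at h
  · linarith [dist_triangle_left p q o, dist_comm o y]
  · linarith [dist_triangle y o q, dist_comm p y, dist_comm o y]
  · linarith [dist_triangle y o p, dist_comm q y, dist_comm q p, dist_comm o y]

lemma exists_dist_zpow_le (hX : IsCoarseLine X c) {h : X ≃ᵢ X} (hh : HasProperOrbits h) (x : X) :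
    ∃ K : ℝ, ∀ y : X, ∃ n : ℤ, dist y ((h ^ n) x) ≤ K := by
  obtain ⟨k, hk, hk₂⟩ : ∃ k : ℤ, 3 * c < dist x ((h ^ k) x) ∧ 2 * c < dist x ((h ^ (2 * k)) x) := by
    have hdist := hh.tendsto_dist x x
    have hinj : Function.Injective fun k : ℤ => 2 * k := mul_right_injective₀ two_ne_zero
    exact ((hdist.eventually_gt_atTop _).and
      ((hdist.comp hinj.tendsto_cofinite).eventually_gt_atTop _)).exists
  have horbit (a b : ℤ) : dist ((h ^ a) x) ((h ^ (a + b)) x) = dist x ((h ^ b) x) := by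
    rw [zpow_add, IsometryEquiv.mul_apply, IsometryEquiv.dist_eq]
  refine ⟨dist x ((h ^ k) x), fun y => ?_⟩
  obtain ⟨n, hn⟩ := (hh.tendsto_dist x y).exists_forall_le
  refine ⟨n, ?_⟩
  have hright := horbit n k
  have hleft : dist ((h ^ n) x) ((h ^ (n - k)) x) = dist x ((h ^ k) x) := by
    simpa [dist_comm] using horbit (n - k) k
  have hends : dist ((h ^ (n - k)) x) ((h ^ (n + k)) x) = dist x ((h ^ (2 * k)) x) := by
    rw [← horbit (n - k), show n - k + 2 * k = n + k by ring]
  rw [← hleft]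
  exact hX.dist_le_of_closest (hright.trans hleft.symm) (hleft ▸ hk) (hends ▸ hk₂)
    (hn (n - k)) (hn (n + k))

end IsCoarseLine

namespace IsDiscreteSubgroup

variable {X : Type*} [MetricSpace X] {Γ : Subgroup (X ≃ᵢ X)}

lemma hasProperOrbits (hΓ : IsDiscreteSubgroup Γ) {g : X ≃ᵢ X} (hg : g ∈ Γ)
    (hgo : ¬ IsOfFinOrder g) : HasProperOrbits g := by
  intro x
  rw [← tendsto_dist_left_atTop_iff x, Filter.tendsto_atTop]
  intro R
  have hinj := injective_zpow_iff_not_isOfFinOrder.2 hgo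
  refine ((hΓ x R).preimage hinj.injOn).subset fun n hn => ?_
  have hlt : dist x ((g ^ n) x) < R := not_le.1 hn
  exact ⟨zpow_mem hg n, hlt.le⟩

lemma finiteIndex_of_forall_dist_le (hΓ : IsDiscreteSubgroup Γ) {H : Subgroup Γ} {x : X} {K : ℝ}
    (hH : ∀ y : X, ∃ h ∈ H, dist y (h.1 x) ≤ K) : H.FiniteIndex := by
  have : Finite {g : X ≃ᵢ X | g ∈ Γ ∧ dist x (g x) ≤ K} := hΓ x K
  let toCoset (g : {g : X ≃ᵢ X | g ∈ Γ ∧ dist x (g x) ≤ K}) : Γ ⧸ H :=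
    QuotientGroup.mk ⟨g.1, g.2.1⟩
  have hsurj : Function.Surjective toCoset := by
    refine Quotient.ind fun g => ?_
    obtain ⟨h, hhH, hh⟩ := hH (g⁻¹.1 x)
    refine ⟨⟨g * h, (g * h).2, ?_⟩, QuotientGroup.mk_mul_of_mem g hhH⟩
    rw [← g.1.dist_eq] at hh
    simpa using hh
  have := Finite.of_surjective toCoset hsurj
  exact Subgroup.finiteIndex_of_finite_quotient

lemma isVirtuallyNilpotent_of_isCoarseLine (hΓ : IsDiscreteSubgroup Γ) {c : ℝ}
    (hX : IsCoarseLine X c) [Nonempty X] {h : X ≃ᵢ X} (hh : h ∈ Γ) (hproper : HasProperOrbits h) :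
    IsVirtuallyNilpotent Γ := by
  obtain ⟨x⟩ := ‹Nonempty X›
  obtain ⟨K, hK⟩ := hX.exists_dist_zpow_le hproper x
  refine .of_finiteIndex_zpowers (g := (⟨h, hh⟩ : Γ))
    (hΓ.finiteIndex_of_forall_dist_le (x := x) (K := K) fun y => ?_)
  obtain ⟨n, hn⟩ := hK y
  exact ⟨⟨h, hh⟩ ^ n, zpow_mem (Subgroup.mem_zpowers _) n, by simpa using hn⟩

end IsDiscreteSubgroup

/-- Every segment `[x, p]` can be prolonged beyond `x` by an arbitrary length `T`, expressed in
terms of the metric only. -/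
def HasExtendableSegments (X : Type*) [PseudoMetricSpace X] : Prop :=
  ∀ x p : X, ∀ T : ℝ, 0 ≤ T → ∃ y : X, dist y x = T ∧ dist y p = dist y x + dist x p

namespace IsGCB

variable {X : Type*} [MetricSpace X] {σ : X → X → ℝ → X}

lemma hasExtendableSegments (hσ : IsGCB σ) : HasExtendableSegments X := by
  intro x p T hT
  obtain ⟨γ, hγ, -, hxp⟩ := hσ.geodComplete x p
  have hx : γ 0 = x := by simpa [hσ.source] using (hxp 0 (by simp)).symm
  have hp : γ (dist x p) = p := by simpa [hσ.target] using (hxp 1 (by simp)).symm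
  have hdist {t : ℝ} (ht : 0 ≤ t) : dist (γ (-T)) (γ t) = T + t := by
    rw [hγ.dist_eq, Real.dist_eq, abs_sub_comm, abs_of_nonneg (by linarith)]
    ring
  have hyx : dist (γ (-T)) x = T := by simpa [hx] using hdist le_rfl
  refine ⟨γ (-T), hyx, ?_⟩
  simpa [hp, hyx] using hdist (dist_nonneg (x := x) (y := p))

lemma preconnectedSpace (hσ : IsGCB σ) : PreconnectedSpace X := by
  refine ⟨isPreconnected_of_forall_pair fun x _ y _ => ?_⟩
  have hlip : LipschitzOnWith (nndist x y) (σ x y) (Set.Icc 0 1) :=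
    .of_dist_le_mul fun t ht t' ht' => by
      rw [hσ.geodesic x y t ht t' ht', Real.dist_eq, mul_comm, coe_nndist]
  exact ⟨σ x y '' Set.Icc 0 1, Set.subset_univ _, ⟨0, by simp, hσ.source x y⟩,
    ⟨1, by simp, hσ.target x y⟩, isPreconnected_Icc.image _ hlip.continuousOn⟩

end IsGCB

section OppositeEnds

variable {X : Type*} [MetricSpace X] {δ : ℝ} {Γ : Subgroup (X ≃ᵢ X)} {Δ : Set (X ≃ᵢ X)}
  {U : Filter X}

lemma exists_opposite_point (hX : IsDeltaHyperbolic X δ) (hext : HasExtendableSegments X)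
    (hΓ : IsDiscreteSubgroup Γ) (hΔΓ : Δ ⊆ Γ) (hΔU : ∀ g ∈ Δ, U ∈ fixedEnds g) [U.NeBot]
    {A : Set X} (hA : A ∈ U) {x : X} (hAx : ∀ p ∈ A, ∀ q ∈ A, δ < gromovProduct x p q)
    (R : ℝ) {T : ℝ} (hT : 0 ≤ T) :
    ∃ y : X, dist y x = T ∧ (∀ p ∈ A, gromovProduct x y p ≤ δ) ∧
      ∀ g ∈ Δ, dist y (g y) ≤ R → dist x (g x) ≤ 2 * R + 3 * δ := by
  have hfix : ∀ᶠ p in U, ∀ g ∈ {g ∈ Δ | dist x (g x) ≤ R + 2 * T},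
      dist x (g x) + δ < gromovProduct x p (g p) := by
    have hfin : {g ∈ Δ | dist x (g x) ≤ R + 2 * T}.Finite :=
      (hΓ x (R + 2 * T)).subset fun g hg => ⟨hΔΓ hg.1, hg.2⟩
    rw [eventually_all_finite hfin]
    exact fun g hg => (hΔU g hg.1).eventually_lt_gromovProduct_map x _
  obtain ⟨p, hp, hpA⟩ := (hfix.and hA).exists
  obtain ⟨y, hyx, hyp⟩ := hext x p T hT
  refine ⟨y, hyx, fun q hq => ?_, fun g hg hgR => ?_⟩
  · have hyxp : gromovProduct x y p = 0 := by
      rw [gromovProduct, hyp, dist_comm x y]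
      ring
    have hpq : 0 + δ < gromovProduct x p q := by simpa using hAx p hpA q hq
    by_contra! hyq
    refine hyxp.not_gt (hX.lt_gromovProduct_trans (q := q) (by simpa using hyq) ?_)
    rwa [gromovProduct_comm]
  · have hgx : dist x (g x) ≤ R + 2 * T := by
      linarith [dist_triangle4 x y (g y) (g x), dist_comm x y, g.dist_eq y x]
    linarith [hX.dist_map_le_of_between hyp (hp g ⟨hg, hgx⟩)]

lemma exists_opposite_end (hX : IsDeltaHyperbolic X δ) (hext : HasExtendableSegments X)
    (hΓ : IsDiscreteSubgroup Γ) (hΔΓ : Δ ⊆ Γ) (hΔU : ∀ g ∈ Δ, U ∈ fixedEnds g)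
    (hproper : ∀ g ∈ Δ, HasProperOrbits g) {R : ℝ}
    (hsmall : ∀ y : X, ∃ g ∈ Δ, dist y (g y) ≤ R) (x : X) :
    ∃ g ∈ Δ, ∃ V ∈ fixedEnds g, ∀ᶠ z in V ×ˢ U, gromovProduct x z.1 z.2 ≤ δ := by
  obtain ⟨g₀, hg₀, -⟩ := hsmall x
  have hU := IsAsymptotic.refl_right hX (hΔU g₀ hg₀)
  have := hU.neBot_left
  obtain ⟨A, hA, hAx⟩ := eventually_prod_self_iff'.1 (hU.eventually_lt x δ)
  choose y hyx hyA hy using fun n : ℕ =>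
    exists_opposite_point hX hext hΓ hΔΓ hΔU hA hAx R (Nat.cast_nonneg n)
  have hfin : {g ∈ Δ | dist x (g x) ≤ 2 * R + 3 * δ}.Finite :=
    (hΓ x (2 * R + 3 * δ)).subset fun g hg => ⟨hΔΓ hg.1, hg.2⟩
  have hexists : ∀ n, ∃ g ∈ {g ∈ Δ | dist x (g x) ≤ 2 * R + 3 * δ}, dist (y n) (g (y n)) ≤ R := by
    intro n
    obtain ⟨g, hg, hgR⟩ := hsmall (y n)
    exact ⟨g, ⟨hg, hy n g hg hgR⟩, hgR⟩
  obtain ⟨g, ⟨hg, -⟩, hgR⟩ := (Ultrafilter.eventually_exists_mem_iff (f := hyperfilter ℕ) hfin).1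
    (Eventually.of_forall hexists)
  have hfar : Tendsto y (hyperfilter ℕ) (Bornology.cobounded X) := by
    rw [← tendsto_dist_right_atTop_iff x]
    simpa only [hyx] using tendsto_natCast_atTop_atTop.mono_left Nat.hyperfilter_le_atTop
  refine ⟨g, hg, _, (hproper g hg).mem_fixedEnds_of_dist_le hX
    (U := (hyperfilter ℕ).map y) hfar hgR, ?_⟩
  filter_upwards [prod_mem_prod (range_mem_map (f := hyperfilter ℕ) (m := y)) hA]
    with ⟨_, p⟩ ⟨⟨n, hn⟩, hp⟩
  exact hn ▸ hyA n p hp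

lemma isCoarseLine_of_forall_exists_dist_le (hX : IsDeltaHyperbolic X δ)
    (hext : HasExtendableSegments X) (hΓ : IsDiscreteSubgroup Γ) {S : Set (Filter X)} {R : ℝ}
    (hsmall : ∀ y : X, ∃ g ∈ Γ, HasProperOrbits g ∧ fixedEnds g = S ∧ dist y (g y) ≤ R) :
    IsCoarseLine X (6 * δ) := by
  cases isEmpty_or_nonempty X
  · exact fun u => isEmptyElim u
  have x₀ : X := Classical.arbitrary X
  obtain ⟨g₀, -, hg₀, hg₀S, -⟩ := hsmall x₀
  obtain ⟨U, hU⟩ := hg₀.fixedEnds_nonempty hX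
  have hopp (x : X) : ∃ V ∈ S, ∀ᶠ z in V ×ˢ U, gromovProduct x z.1 z.2 ≤ δ := by
    obtain ⟨g, ⟨-, -, hgS⟩, V, hV, hVU⟩ := exists_opposite_end (R := R) hX hext hΓ
      (Δ := {g | g ∈ Γ ∧ HasProperOrbits g ∧ fixedEnds g = S}) (fun g hg => hg.1)
      (fun g hg => by rwa [hg.2.2, ← hg₀S]) (fun g hg => hg.2.1)
      (fun y => by simpa only [Set.mem_ofPred_eq, and_assoc] using hsmall y) x
    exact ⟨V, hgS ▸ hV, hVU⟩
  have huniq {V W : Filter X} (hV : V ∈ S) (hW : W ∈ S) {x x' : X}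
      (hVU : ∀ᶠ z in V ×ˢ U, gromovProduct x z.1 z.2 ≤ δ)
      (hWU : ∀ᶠ z in W ×ˢ U, gromovProduct x' z.1 z.2 ≤ δ) : IsAsymptotic W V := by
    rw [← hg₀S] at hV hW
    rcases hg₀.isAsymptotic_of_mem_fixedEnds hX hW hV hU with h | h | h
    · exact h
    · exact absurd hWU (h.not_eventually_le x' δ)
    · exact absurd hVU (h.not_eventually_le x δ)
  obtain ⟨V, hV, hVU⟩ := hopp x₀
  have hline (x : X) : ∀ᶠ z in V ×ˢ U, gromovProduct x z.1 z.2 ≤ δ + δ := by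
    obtain ⟨W, hW, hWU⟩ := hopp x
    exact (huniq hV hW hVU hWU).eventually_gromovProduct_le hX hWU
  have := (hg₀S ▸ hV : V ∈ fixedEnds g₀).neBot_right
  have := hU.neBot_right
  convert! IsCoarseLine.of_gromovProduct_le hX hline using 1
  ring

end OppositeEnds

lemma fixedEnds_sq_eq_of_dist_lt {X : Type*} [MetricSpace X] [PreconnectedSpace X] {δ r : ℝ}
    (hX : IsDeltaHyperbolic X δ) {Γ : Subgroup (X ≃ᵢ X)}
    (hproper : ∀ g ∈ Γ, g ≠ 1 → HasProperOrbits g)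
    (hnil : ∀ x : X, IsVirtuallyNilpotent (almostStabilizer Γ r x)) {G : X → X ≃ᵢ X}
    (hGΓ : ∀ x, G x ∈ Γ) (hG1 : ∀ x, G x ≠ 1) (hG : ∀ x, dist x (G x x) < r) (x y : X) :
    fixedEnds (G x ^ 2) = fixedEnds (G y ^ 2) := by
  have : Nonempty X := ⟨x⟩
  have hsmall {x : X} {g : X ≃ᵢ X} (hg : g ∈ Γ) (hg1 : g ≠ 1) (hgr : dist x (g x) ≤ r) :
      fixedEnds (G x ^ 2) = fixedEnds (g ^ 2) := by
    have hle : almostStabilizer Γ r x ≤ Γ := (Subgroup.closure_le Γ).2 fun _ h => h.1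
    exact fixedEnds_sq_eq_of_isVirtuallyNilpotent hX (hnil x) (fun g hg => hproper g (hle hg))
      (Subgroup.subset_closure ⟨hGΓ x, (hG x).le⟩) (hG1 x)
      (Subgroup.subset_closure ⟨hg, hgr⟩) hg1
  have hloc : IsLocallyConstant fun x => fixedEnds (G x ^ 2) := by
    rw [IsLocallyConstant.iff_eventually_eq]
    intro x
    have hcont : Continuous fun y => dist y (G x y) := continuous_id.dist (G x).continuous
    filter_upwards [hcont.continuousAt.eventually_lt continuousAt_const (hG x)] with y hy
    exact hsmall (hGΓ x) (hG1 x) hy.le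
  exact hloc.apply_eq_of_preconnectedSpace x y

lemma IsNonElementary.not_isVirtuallyNilpotent {X : Type*} [MetricSpace X]
    {Γ : Subgroup (X ≃ᵢ X)} (hΓ : IsNonElementary Γ) : ¬ IsVirtuallyNilpotent Γ := by
  obtain ⟨a, b, ha, hb, hab⟩ := hΓ
  exact fun hnil => hab (hnil.of_injective (Subgroup.inclusion_injective
    ((Subgroup.closure_le Γ).2 (Set.pair_subset ha hb))))

theorem diastole_lower_bound_general {X : Type*} [MetricSpace X] [PreconnectedSpace X] {δ r : ℝ}
    (hX : IsDeltaHyperbolic X δ) (hext : HasExtendableSegments X) {Γ : Subgroup (X ≃ᵢ X)}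
    (hΓ : IsDiscreteSubgroup Γ) (hne : ¬ IsVirtuallyNilpotent Γ)
    (htf : ∀ g ∈ Γ, g ≠ 1 → ¬ IsOfFinOrder g)
    (hnil : ∀ x : X, IsVirtuallyNilpotent (almostStabilizer Γ r x)) :
    ∃ x : X, ∀ g ∈ Γ, g ≠ 1 → r ≤ dist x (g x) := by
  by_contra! hsmall
  choose G hGΓ hG1 hG using hsmall
  have hproper (g) (hg : g ∈ Γ) (hg1 : g ≠ 1) := hΓ.hasProperOrbits hg (htf g hg hg1)
  have hGp (x : X) : HasProperOrbits (G x) := hproper _ (hGΓ x) (hG1 x)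
  cases isEmpty_or_nonempty X
  · have : Subsingleton (X ≃ᵢ X) := DFunLike.coe_injective.subsingleton
    exact hne ⟨⊤, inferInstance, inferInstance⟩
  have x₀ : X := Classical.arbitrary X
  have hline : IsCoarseLine X (6 * δ) := by
    refine isCoarseLine_of_forall_exists_dist_le (S := fixedEnds (G x₀ ^ 2)) (R := 2 * r) hX hext hΓ
      fun y => ⟨G y ^ 2, pow_mem (hGΓ y) 2, (hGp y).pow two_ne_zero,
        fixedEnds_sq_eq_of_dist_lt hX hproper hnil hGΓ hG1 hG y x₀, ?_⟩
    have := dist_pow_apply_le (G y) y 2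
    push_cast at this
    linarith [hG y]
  exact hne (hΓ.isVirtuallyNilpotent_of_isCoarseLine hline (hGΓ x₀) (hGp x₀))

/-- **Corollary 1.4**: lower bound for the diastole of torsion-free groups:
`dias(Γ,X) = sup_x inf_{g ≠ 1} d(x, g x) ≥ ε₀`, rendered in junk-value-free form:
for every `r < ε₀` there is a point displaced at least `r` by all nontrivial elements.
The hypothesis `hmarg` states that `nilrad(Γ,x) ≥ ε₀` for every `x ∈ X`. -/
theorem diastole_lower_bound
    (P₀ r₀ δ ε₀ : ℝ) (hP₀ : 0 < P₀) (hr₀ : 0 < r₀) (hδ : 0 < δ) (hε₀ : 0 < ε₀)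
    (X : Type*) [MetricSpace X] [CompleteSpace X] (σ : X → X → ℝ → X)
    (hGCB : IsGCB σ) (hhyp : IsDeltaHyperbolic X δ) (hpack : IsPacked X P₀ r₀)
    (Γ : Subgroup (X ≃ᵢ X)) (hσΓ : ∀ g ∈ Γ, IsSigmaIsometry σ g)
    (hdisc : IsDiscreteSubgroup Γ) (hne : IsNonElementary Γ)
    (htf : ∀ g ∈ Γ, g ≠ 1 → ¬ IsOfFinOrder g)
    (hmarg : ∀ x : X, ∀ r : ℝ, 0 ≤ r → r < ε₀ →
      IsVirtuallyNilpotent ↥(almostStabilizer Γ r x)) :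
    ∀ r : ℝ, r < ε₀ →
      ∃ x : X, ∀ g ∈ Γ, g ≠ 1 → r ≤ dist x (g x) := by
  have := hGCB.preconnectedSpace
  intro r hr
  obtain ⟨x, hx⟩ := diastole_lower_bound_general hhyp hGCB.hasExtendableSegments hdisc
    hne.not_isVirtuallyNilpotent htf
    fun x => hmarg x (max r 0) (le_max_right r 0) (max_lt hr hε₀)
  exact ⟨x, fun g hg hg1 => (le_max_left r 0).trans (hx g hg hg1)⟩
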